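/- Let d ≥ 3 and let H = F_2[T, X_2, …, X_d]/(X_i² − T·X_i : 2 ≤ i ≤ d). Then H is not strongly Koszul: there exists no minimal system X of homogeneous generators of the augmentation ideal H_+ such that for every subset Y ⊊ X and every x ∈ X \ Y, the colon ideal (Y) : x is generated by a subset of X. -/

import Mathlib

open MvPolynomial

/-- The colon ideal `I : x = {a | a * x ∈ I}`. -/
def colonIdeal {A : Type*} [Ring A] (I : Ideal A) (x : A) : Ideal A :=
  Submodule.comap (LinearMap.toSpanSingleton A A x) I

/-- The defining relations `X_i² − T·X_i` (with `T = X 0`) of the cohomology of a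
superpythagorean field. -/
noncomputable def spRel (d : ℕ) [NeZero d] : Ideal (MvPolynomial (Fin d) (ZMod 2)) :=
  Ideal.span {p | ∃ i : Fin d, i ≠ 0 ∧ p = X i ^ 2 - X 0 * X i}

/-- The algebra `H = F₂[T, X₂, …, X_d]/(X_i² − T·X_i)`. -/
abbrev SPH (d : ℕ) [NeZero d] := MvPolynomial (Fin d) (ZMod 2) ⧸ spRel d

/-- The images `t = gen d 0`, `α_i = gen d i` of the variables in `H`. -/
noncomputable def gen (d : ℕ) [NeZero d] (i : Fin d) : SPH d :=
  Ideal.Quotient.mk (spRel d) (X i)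

/-- The augmentation ideal `H_+` of `H` (the ideal of elements with zero constant term,
which is generated by the images of the variables since `H` is generated in degree 1). -/
noncomputable def Hplus (d : ℕ) [NeZero d] : Ideal (SPH d) :=
  Ideal.span (Set.range (gen d))

/-- An element of `H` is homogeneous (of some degree `n`) if it is the image of a
homogeneous polynomial of degree `n`; since the relation ideal is homogeneous this
agrees with the quotient grading. -/
def IsHomogElem (d : ℕ) [NeZero d] (h : SPH d) : Prop :=
  ∃ n : ℕ, ∃ p : MvPolynomial (Fin d) (ZMod 2),
    p.IsHomogeneous n ∧ Ideal.Quotient.mk (spRel d) p = h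

/-!
The defining relations make `z (z + t) = 0` for every linear form `z` of `H`, while evaluation
at the `F₂`-points with `t = 1` shows that two nonzero linear forms with zero product differ
exactly by `t`. A minimal homogeneous system of generators `X` consists of linear forms, so if the
annihilator of `z ∈ X`, `z ≠ t`, is generated by a subset of `X`, then `z + t ∈ X`. But a minimal
system that is stable under adding `t` has at most two elements, since `z + (z + t) = t` and
`z + (z + t) + (w + t) = w`; on the other hand `H_+` needs at least `dim H_+ / H_+² = d` generators.
-/

lemma notMem_span_sdiff_singleton {R M : Type*} [Semiring R] [AddCommMonoid M] [Module R M]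
    {X : Set M} (hmin : ∀ Y ⊂ X, Submodule.span R Y ≠ Submodule.span R X) {x : M} (hx : x ∈ X) :
    x ∉ Submodule.span R (X \ {x}) := by
  intro hmem
  refine hmin (X \ {x}) (Set.sdiff_singleton_ssubset.2 hx) ?_
  rw [← Submodule.span_insert_eq_span hmem, Set.insert_sdiff_self_of_mem hx]

lemma encard_le_two_of_add_mem {R M : Type*} [Semiring R] [AddCommGroup M] [Module R M]
    [Module (ZMod 2) M] {X : Set M}
    (hX : ∀ x ∈ X, x ∉ Submodule.span R (X \ {x})) {t : M} (ht : t ≠ 0)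
    (hadd : ∀ z ∈ X, z ≠ t → z + t ∈ X) : X.encard ≤ 2 := by
  have hspan {x y : M} (hy : y ∈ X) (hyx : y ≠ x) : y ∈ Submodule.span R (X \ {x}) :=
    Submodule.subset_span ⟨hy, hyx⟩
  have htX : t ∈ X → X ⊆ {t} := by
    intro htX z hz
    by_contra! hzt : z ≠ t
    have hz0 : z ≠ 0 := fun h => hX z hz (h ▸ Submodule.zero_mem _)
    have hsum : z + (z + t) = t := by rw [← add_assoc, ZModModule.add_self, zero_add]
    have hmem : z + (z + t) ∈ Submodule.span R (X \ {t}) :=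
      add_mem (hspan hz hzt) (hspan (hadd z hz hzt) (by simpa using hz0))
    exact hX t htX (by rwa [hsum] at hmem)
  by_cases htmem : t ∈ X
  · exact (Set.encard_le_encard (htX htmem)).trans (by simp)
  have hadd' : ∀ z ∈ X, z + t ∈ X := fun z hz => hadd z hz (fun h => htmem (h ▸ hz))
  obtain rfl | ⟨z, hz⟩ := X.eq_empty_or_nonempty
  · simp
  have hcard : ({z, z + t} : Set M).encard ≤ 2 :=
    (Set.encard_insert_le {z + t} z).trans (by rw [Set.encard_singleton, one_add_one_eq_two])
  suffices hpair : X ⊆ {z, z + t} from (Set.encard_le_encard hpair).trans hcard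
  intro w hw
  by_contra! hne
  obtain ⟨hwz, hwzt⟩ : w ≠ z ∧ w ≠ z + t := by simpa using hne
  have hsum : z + (z + t) + (w + t) = w := by
    calc z + (z + t) + (w + t) = (z + z) + (t + t) + w := by abel
      _ = w := by simp only [ZModModule.add_self, zero_add]
  have hmem : z + (z + t) + (w + t) ∈ Submodule.span R (X \ {w}) :=
    add_mem (add_mem (hspan hz hwz.symm) (hspan (hadd' z hz) hwzt.symm))
      (hspan (hadd' w hw) (by simpa using ht))
  exact hX w hw (by rwa [hsum] at hmem)

lemma aeval_inr_single {R σ : Type*} [CommSemiring R] [DecidableEq σ] (p : MvPolynomial σ R) :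
    aeval (fun i => (TrivSqZeroExt.inr (Pi.single i 1) : TrivSqZeroExt R (σ → R))) p =
      TrivSqZeroExt.inl (coeff 0 p) +
        TrivSqZeroExt.inr (fun i => coeff (Finsupp.single i 1) p) := by
  induction p using MvPolynomial.induction_on with
  | C a =>
    ext i
    · simp [TrivSqZeroExt.algebraMap_eq_inl]
    · simp [coeff_C, TrivSqZeroExt.algebraMap_eq_inl, eq_comm (a := (0 : σ →₀ ℕ))]
  | add p q hp hq =>
    rw [map_add, hp, hq]
    ext i <;> simp
  | mul_X p j hp =>
    rw [map_mul, hp, aeval_X]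
    ext i
    · simp [coeff_mul_X']
    · by_cases hij : j = i
      · subst hij; simp [coeff_mul_X']
      · simp [coeff_mul_X', hij, Ne.symm hij]

lemma exists_dotProduct_ne_zero {R ι : Type*} [NonAssocSemiring R] [Nontrivial R] [Fintype ι]
    (i₀ : ι) {v : ι → R} (hv : v ≠ 0) :
    ∃ e : ι → R, e i₀ = 1 ∧ v ⬝ᵥ e ≠ 0 := by
  classical
  by_cases h0 : v i₀ = 0
  · obtain ⟨i, hi : v i ≠ 0⟩ := Function.ne_iff.1 hv
    have hne : i₀ ≠ i := fun h => hi (h ▸ h0)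
    exact ⟨Pi.single i₀ 1 + Pi.single i 1, by simp [hne], by simpa [dotProduct_add, h0] using hi⟩
  · exact ⟨Pi.single i₀ 1, by simp, by simpa using h0⟩

lemma mem_colonIdeal {A : Type*} [Ring A] {I : Ideal A} {a x : A} :
    a ∈ colonIdeal I x ↔ a * x ∈ I := by
  simp [colonIdeal]

namespace SPH

variable {d : ℕ} [NeZero d]

lemma gen_sq (i : Fin d) : gen d i ^ 2 = gen d 0 * gen d i := by
  obtain rfl | hi := eq_or_ne i 0
  · exact sq _
  · rw [← sub_eq_zero]
    exact Ideal.Quotient.eq_zero_iff_mem.2 (Ideal.subset_span ⟨i, hi, rfl⟩)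

section Lift

variable {A : Type*} [CommRing A] [Algebra (ZMod 2) A]

/-- The universal property of `H`: elements of an `F₂`-algebra satisfying the relations of the
generators of `H` define a homomorphism from `H`. -/
noncomputable def lift (x : Fin d → A) (hx : ∀ i, i ≠ 0 → x i ^ 2 = x 0 * x i) :
    SPH d →ₐ[ZMod 2] A :=
  Ideal.Quotient.liftₐ (spRel d) (aeval x) (by
    suffices hle : spRel d ≤ RingHom.ker (aeval x : _ →ₐ[ZMod 2] A) from fun _ ha => hle ha
    refine Ideal.span_le.2 ?_
    rintro _ ⟨i, hi, rfl⟩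
    simp [RingHom.mem_ker, hx i hi])

lemma lift_mk (x : Fin d → A) (hx : ∀ i, i ≠ 0 → x i ^ 2 = x 0 * x i)
    (p : MvPolynomial (Fin d) (ZMod 2)) :
    lift x hx (Ideal.Quotient.mk (spRel d) p) = aeval x p :=
  rfl

@[simp]
lemma lift_gen (x : Fin d → A) (hx : ∀ i, i ≠ 0 → x i ^ 2 = x 0 * x i) (i : Fin d) :
    lift x hx (gen d i) = x i := by
  rw [gen, lift_mk, aeval_X]

end Lift

variable (d) in
/-- The truncation `H → H / H_+² = F₂ ⊕ F₂^d`, remembering the constant and the linear part. -/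
noncomputable def truncation : SPH d →ₐ[ZMod 2] TrivSqZeroExt (ZMod 2) (Fin d → ZMod 2) :=
  lift (fun i => TrivSqZeroExt.inr (Pi.single i 1)) (by simp [sq])

variable (d) in
/-- The coefficients in degree one of an element of `H`. -/
noncomputable def linearPart : SPH d →ₗ[ZMod 2] (Fin d → ZMod 2) :=
  TrivSqZeroExt.sndHom (ZMod 2) _ ∘ₗ (truncation d).toLinearMap

variable (d) in
/-- The element `∑ v i • gen d i` of degree one with coefficient vector `v`. -/
noncomputable def linForm : (Fin d → ZMod 2) →ₗ[ZMod 2] SPH d :=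
  Fintype.linearCombination (ZMod 2) (gen d)

instance : CharP (SPH d) 2 :=
  have : Nontrivial (SPH d) := (truncation d).toRingHom.domain_nontrivial
  charP_of_injective_algebraMap (algebraMap (ZMod 2) (SPH d)).injective 2

lemma linearPart_mk (p : MvPolynomial (Fin d) (ZMod 2)) (i : Fin d) :
    linearPart d (Ideal.Quotient.mk _ p) i = coeff (Finsupp.single i 1) p := by
  simp [linearPart, truncation, lift_mk, aeval_inr_single]

@[simp]
lemma linForm_single (i : Fin d) : linForm d (Pi.single i 1) = gen d i := by
  simp [linForm]

lemma linearPart_gen (i : Fin d) : linearPart d (gen d i) = Pi.single i 1 := by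
  simp [linearPart, truncation]

@[simp]
lemma linearPart_linForm (v : Fin d → ZMod 2) : linearPart d (linForm d v) = v := by
  suffices h : linearPart d ∘ₗ linForm d = LinearMap.id from LinearMap.congr_fun h v
  ext i : 2
  simp [linearPart_gen]

lemma gen_zero_ne_zero : gen d 0 ≠ 0 := by
  intro h
  simpa [h] using congrFun (linearPart_gen (0 : Fin d)) 0

lemma linForm_sq (v : Fin d → ZMod 2) : linForm d v ^ 2 = gen d 0 * linForm d v := by
  have hsq : ∀ c : ZMod 2, c ^ 2 = c := by decide
  simp only [linForm, Fintype.linearCombination_apply, CharTwo.sum_sq, smul_pow, hsq, gen_sq,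
    Finset.mul_sum, mul_smul_comm]

lemma lift_linForm (e : Fin d → ZMod 2) (he : ∀ i, i ≠ 0 → e i ^ 2 = e 0 * e i)
    (v : Fin d → ZMod 2) : lift e he (linForm d v) = v ⬝ᵥ e := by
  simp [linForm, Fintype.linearCombination_apply, dotProduct]

lemma dotProduct_mul_dotProduct_eq_zero {u v : Fin d → ZMod 2}
    (h : linForm d u * linForm d v = 0) {e : Fin d → ZMod 2} (he : e 0 = 1) :
    (u ⬝ᵥ e) * (v ⬝ᵥ e) = 0 := by
  have hsq : ∀ c : ZMod 2, c ^ 2 = c := by decide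
  have hrel : ∀ i, i ≠ 0 → e i ^ 2 = e 0 * e i := fun i _ => by rw [he, one_mul, hsq]
  rw [← lift_linForm e hrel u, ← lift_linForm e hrel v, ← map_mul, h, map_zero]

/- If `u + v + t ≠ 0`, choose points `p`, `q`, `r` of the hyperplane `t = 1` at which `u`, `v` and
`u + v + t`, respectively, do not vanish. Neither `u` nor `v` vanishes at `p + q + r`. -/
lemma eq_add_single_of_linForm_mul_eq_zero {u v : Fin d → ZMod 2} (hu : u ≠ 0) (hv : v ≠ 0)
    (h : linForm d u * linForm d v = 0) : u = v + Pi.single 0 1 := by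
  by_contra hne
  have hw : u + v + Pi.single 0 1 ≠ 0 := by
    rwa [add_assoc, ne_eq, CharTwo.add_eq_zero]
  obtain ⟨p, hp, hup⟩ := exists_dotProduct_ne_zero 0 hu
  obtain ⟨q, hq, hvq⟩ := exists_dotProduct_ne_zero 0 hv
  obtain ⟨r, hr, hwr⟩ := exists_dotProduct_ne_zero 0 hw
  have hvp : v ⬝ᵥ p = 0 :=
    (mul_eq_zero.1 (dotProduct_mul_dotProduct_eq_zero h hp)).resolve_left hup
  have huq : u ⬝ᵥ q = 0 :=
    (mul_eq_zero.1 (dotProduct_mul_dotProduct_eq_zero h hq)).resolve_right hvq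
  obtain ⟨hur, hvr⟩ : u ⬝ᵥ r = 0 ∧ v ⬝ᵥ r = 0 := by
    have hcases : ∀ a b : ZMod 2, a * b = 0 → a + b + 1 ≠ 0 → a = 0 ∧ b = 0 := by decide
    refine hcases _ _ (dotProduct_mul_dotProduct_eq_zero h hr) ?_
    simpa [add_dotProduct, hr] using hwr
  have hpqr : (p + q + r) 0 = 1 := by
    simp [hp, hq, hr, CharTwo.add_self_eq_zero]
  have hprod := dotProduct_mul_dotProduct_eq_zero h hpqr
  simp [dotProduct_add, hvp, huq, hur, hvr, hup, hvq] at hprod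

lemma mk_mem_range_linForm {p : MvPolynomial (Fin d) (ZMod 2)} (hp : p.IsHomogeneous 1) :
    Ideal.Quotient.mk (spRel d) p ∈ LinearMap.range (linForm d) := by
  have hle : homogeneousSubmodule (Fin d) (ZMod 2) 1 ≤
      (LinearMap.range (linForm d)).comap (Ideal.Quotient.mkₐ (ZMod 2) (spRel d)).toLinearMap := by
    rw [homogeneousSubmodule_one_eq_span_X, Submodule.span_le]
    rintro _ ⟨i, rfl⟩
    exact ⟨Pi.single i 1, linForm_single i⟩
  exact hle hp

lemma _root_.IsHomogElem.mem_range_linForm_or_linearPart_eq_zero {z : SPH d}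
    (hz : IsHomogElem d z) : z ∈ LinearMap.range (linForm d) ∨ linearPart d z = 0 := by
  obtain ⟨n, p, hp, rfl⟩ := hz
  obtain rfl | hn := eq_or_ne n 1
  · exact Or.inl (mk_mem_range_linForm hp)
  · refine Or.inr (funext fun i => ?_)
    rw [linearPart_mk]
    exact hp.coeff_eq_zero (by simpa [Finsupp.degree_single] using hn.symm)

lemma fst_truncation_eq_zero {z : SPH d} (hz : z ∈ Hplus d) : (truncation d z).fst = 0 := by
  have hle : Hplus d ≤
      RingHom.ker ((TrivSqZeroExt.fstHom (ZMod 2) _ _).comp (truncation d)) := by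
    refine Ideal.span_le.2 ?_
    rintro _ ⟨i, rfl⟩
    simp [RingHom.mem_ker, truncation]
  exact hle hz

lemma linearPart_mul {z : SPH d} (a : SPH d) (hz : z ∈ Hplus d) :
    linearPart d (a * z) = (truncation d a).fst • linearPart d z := by
  simp [linearPart, fst_truncation_eq_zero hz]

lemma linearPart_mem_span_image {X : Set (SPH d)} (hX : Ideal.span X ≤ Hplus d) {z : SPH d}
    (hz : z ∈ Ideal.span X) : linearPart d z ∈ Submodule.span (ZMod 2) (linearPart d '' X) := by
  induction hz using Submodule.span_induction with
  | mem x hx => exact Submodule.subset_span ⟨x, hx, rfl⟩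
  | zero => simp
  | add x y _ _ hx hy => rw [map_add]; exact add_mem hx hy
  | smul a x hxX hx =>
    rw [smul_eq_mul, linearPart_mul a (hX hxX)]
    exact Submodule.smul_mem _ _ hx

lemma span_linearPart_image_eq_top {X : Set (SPH d)} (hX : Ideal.span X = Hplus d) :
    Submodule.span (ZMod 2) (linearPart d '' X) = ⊤ := by
  rw [eq_top_iff, ← (Pi.basisFun (ZMod 2) (Fin d)).span_eq, Submodule.span_le]
  rintro _ ⟨i, rfl⟩
  have hi : gen d i ∈ Ideal.span X := hX ▸ Ideal.subset_span ⟨i, rfl⟩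
  simpa [linearPart_gen] using linearPart_mem_span_image hX.le hi

lemma le_encard_of_span_eq_Hplus {X : Set (SPH d)} (hX : Ideal.span X = Hplus d) :
    (d : ℕ∞) ≤ X.encard := by
  have hrank : (d : Cardinal) ≤ Cardinal.mk (linearPart d '' X) := by
    calc (d : Cardinal) = Module.rank (ZMod 2) (Fin d → ZMod 2) := by simp
      _ = Module.rank (ZMod 2) (Submodule.span (ZMod 2) (linearPart d '' X)) := by
        rw [span_linearPart_image_eq_top hX, rank_top]
      _ ≤ Cardinal.mk (linearPart d '' X) := rank_span_le _
  calc (d : ℕ∞) = Cardinal.toENat d := by simp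
    _ ≤ (linearPart d '' X).encard := Cardinal.toENat.monotone' hrank
    _ ≤ X.encard := Set.encard_image_le _ _

lemma span_inter_range_linForm {X : Set (SPH d)} (hhom : ∀ z ∈ X, IsHomogElem d z)
    (hX : Ideal.span X = Hplus d) :
    Ideal.span (X ∩ LinearMap.range (linForm d)) = Hplus d := by
  set I := Ideal.span (X ∩ LinearMap.range (linForm d))
  have hle : Submodule.span (ZMod 2) (linearPart d '' X) ≤
      (I.restrictScalars (ZMod 2)).comap (linForm d) := by
    rw [Submodule.span_le]
    rintro _ ⟨z, hz, rfl⟩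
    obtain ⟨v, rfl⟩ | h0 := (hhom z hz).mem_range_linForm_or_linearPart_eq_zero
    · simpa using (Ideal.subset_span ⟨hz, v, rfl⟩ : linForm d v ∈ I)
    · simp [h0]
  rw [span_linearPart_image_eq_top hX] at hle
  refine le_antisymm (hX ▸ Ideal.span_mono Set.inter_subset_left) (Ideal.span_le.2 ?_)
  rintro _ ⟨i, rfl⟩
  simpa using hle (Submodule.mem_top (x := Pi.single i 1))

lemma subset_range_linForm {X : Set (SPH d)} (hhom : ∀ z ∈ X, IsHomogElem d z)
    (hX : Ideal.span X = Hplus d) (hmin : ∀ Y ⊂ X, Ideal.span Y ≠ Hplus d) :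
    X ⊆ LinearMap.range (linForm d) := by
  by_contra hnot
  exact hmin _ (Set.inter_ssubset_left_iff.2 hnot) (span_inter_range_linForm hhom hX)

lemma add_gen_zero_mem_of_colonIdeal_eq_span {Z : Set (SPH d)}
    (hZ : Z ⊆ LinearMap.range (linForm d)) (h0 : 0 ∉ Z) {z : SPH d}
    (hz : z ∈ LinearMap.range (linForm d)) (hz0 : z ≠ 0) (hzt : z ≠ gen d 0)
    (hcolon : colonIdeal ⊥ z = Ideal.span Z) : z + gen d 0 ∈ Z := by
  have hann (a : SPH d) : a ∈ Ideal.span Z ↔ a * z = 0 := by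
    rw [← hcolon, mem_colonIdeal, Ideal.mem_bot]
  obtain ⟨v, rfl⟩ := hz
  have heq : ∀ w ∈ Z, w = linForm d v + gen d 0 := by
    intro w hw
    obtain ⟨u, rfl⟩ := hZ hw
    have hu : u ≠ 0 := by rintro rfl; exact h0 (by simpa using hw)
    have hv : v ≠ 0 := by rintro rfl; exact hz0 (map_zero _)
    have huv := (hann _).1 (Ideal.subset_span hw)
    rw [eq_add_single_of_linForm_mul_eq_zero hu hv huv, map_add, linForm_single]
  have hmem : linForm d v + gen d 0 ∈ Ideal.span Z := by
    rw [hann, add_mul, ← sq, linForm_sq, CharTwo.add_self_eq_zero]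
  obtain rfl | ⟨w, hw⟩ := Z.eq_empty_or_nonempty
  · rw [Ideal.span_empty, Ideal.mem_bot, CharTwo.add_eq_zero] at hmem
    exact absurd hmem hzt
  · exact heq w hw ▸ hw

end SPH

theorem stmt11_general (d : ℕ) [NeZero d] (hd : 3 ≤ d) :
    ¬ ∃ X : Set (SPH d),
        (∀ z ∈ X, IsHomogElem d z) ∧
        Ideal.span X = Hplus d ∧
        (∀ Y ⊂ X, Ideal.span Y ≠ Hplus d) ∧
        (∀ z ∈ X, ∃ Z ⊆ X, colonIdeal ⊥ z = Ideal.span Z) := by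
  rintro ⟨X, hhom, hspan, hmin, hann⟩
  have hirr : ∀ x ∈ X, x ∉ Ideal.span (X \ {x}) := fun x hx =>
    notMem_span_sdiff_singleton (fun Y hY => (hmin Y hY).trans_eq hspan.symm) hx
  have hlin : X ⊆ LinearMap.range (SPH.linForm d) := SPH.subset_range_linForm hhom hspan hmin
  have h0 : (0 : SPH d) ∉ X := fun h => hirr 0 h (zero_mem _)
  have hadd : ∀ z ∈ X, z ≠ gen d 0 → z + gen d 0 ∈ X := by
    intro z hz hzt
    obtain ⟨Z, hZX, hZ⟩ := hann z hz
    exact hZX <| SPH.add_gen_zero_mem_of_colonIdeal_eq_span (hZX.trans hlin) (fun h => h0 (hZX h))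
      (hlin hz) (fun h => h0 (h ▸ hz)) hzt hZ
  have hcard : (d : ℕ∞) ≤ 2 := (SPH.le_encard_of_span_eq_Hplus hspan).trans
    (encard_le_two_of_add_mem hirr SPH.gen_zero_ne_zero hadd)
  have : d ≤ 2 := by exact_mod_cast hcard
  omega

/-- For `d ≥ 3`, the algebra `H = F₂[T, X₂, …, X_d]/(X_i² − T·X_i)`
is not strongly Koszul: no minimal system `X` of homogeneous generators of `H_+` has all
colon ideals `(Y) : x` (for `Y ⊊ X`, `x ∈ X \ Y`) generated by subsets of `X`. -/
theorem stmt11 (d : ℕ) [NeZero d] (hd : 3 ≤ d) :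
    ¬ ∃ X : Set (SPH d),
        (∀ z ∈ X, IsHomogElem d z) ∧
        Ideal.span X = Hplus d ∧
        (∀ Y ⊂ X, Ideal.span Y ≠ Hplus d) ∧
        (∀ Y ⊂ X, ∀ z ∈ X \ Y,
          ∃ Z ⊆ X, colonIdeal (Ideal.span Y) z = Ideal.span Z) := by
  rintro ⟨X, hhom, hspan, hmin, hcolon⟩
  refine stmt11_general d hd ⟨X, hhom, hspan, hmin, fun z hz => ?_⟩
  simpa using hcolon ∅ (Set.empty_ssubset.2 ⟨z, hz⟩) z ⟨hz, Set.notMem_empty z⟩
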